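/- Define the polynomials u_n(y) = Σ_{i≥1} a(n,i) y^i and v_n(y) = Σ_{i≥1} b(n,i) y^i in ℤ[y]. Then u_1(y) = 2y, and for all n ≥ 2, u_n(y) = (1 + y)·u_{n-1}(y) + 2·v_{n-1}(y). Equivalently, in terms of bivariate generating functions T_1(x,y) = Σ_{n≥1} u_n(y) x^n and T_2(x,y) = Σ_{n≥1} v_n(y) x^n, one has T_1 = 2xy + x·T_1 + xy·T_1 + 2x·T_2. -/

import Mathlib

open SimpleGraph Polynomial

/-- A 2-colored partition of a simple graph `G`: a partition of the vertex set into
nonempty parts, each inducing a connected subgraph, together with an assignment of one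
of two colors to each part such that distinct parts joined by an edge get different colors. -/
structure TwoColoredPartition {V : Type*} (G : SimpleGraph V) where
  parts : Set (Set V)
  nonempty : ∀ p ∈ parts, p.Nonempty
  covers : ∀ v : V, ∃ p, p ∈ parts ∧ v ∈ p
  disj : ∀ p ∈ parts, ∀ q ∈ parts, p ≠ q → Disjoint p q
  conn : ∀ p ∈ parts, (G.induce p).Connected
  color : parts → Fin 2
  proper : ∀ p q : parts, p ≠ q →
    (∃ v ∈ (p : Set V), ∃ w ∈ (q : Set V), G.Adj v w) → color p ≠ color q

/-- The size of a 2-colored partition: its number of parts. -/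
noncomputable def TwoColoredPartition.size {V : Type*} {G : SimpleGraph V}
    (T : TwoColoredPartition G) : ℕ :=
  T.parts.ncard

/-- The color of a vertex in a 2-colored partition: the color of the part containing it. -/
noncomputable def TwoColoredPartition.vcolor {V : Type*} {G : SimpleGraph V}
    (T : TwoColoredPartition G) (v : V) : Fin 2 :=
  T.color ⟨(T.covers v).choose, (T.covers v).choose_spec.1⟩

/-- All three vertices of the last triangle of `K₃ × Pₙ` (those whose path coordinate is
the last vertex of the path) have the same color. -/
def sameColorLastTriangle {n : ℕ}
    (T : TwoColoredPartition ((⊤ : SimpleGraph (Fin 3)) □ pathGraph n)) : Prop :=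
  ∀ v w : Fin 3 × Fin n, (v.2 : ℕ) = n - 1 → (w.2 : ℕ) = n - 1 → T.vcolor v = T.vcolor w

/-- Both colors occur among the three vertices of the last triangle of `K₃ × Pₙ`. -/
def bothColorsLastTriangle {n : ℕ}
    (T : TwoColoredPartition ((⊤ : SimpleGraph (Fin 3)) □ pathGraph n)) : Prop :=
  ∃ v w : Fin 3 × Fin n, (v.2 : ℕ) = n - 1 ∧ (w.2 : ℕ) = n - 1 ∧ T.vcolor v ≠ T.vcolor w

/-- `a n i`: the number of 2-colored partitions of `K₃ × Pₙ` of size `i` in which all three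
vertices of the last triangle have the same color. -/
noncomputable def a (n i : ℕ) : ℕ :=
  Nat.card {T : TwoColoredPartition ((⊤ : SimpleGraph (Fin 3)) □ pathGraph n) //
    T.size = i ∧ sameColorLastTriangle T}

/-- `b n i`: the number of 2-colored partitions of `K₃ × Pₙ` of size `i` in which both colors
occur among the vertices of the last triangle. -/
noncomputable def b (n i : ℕ) : ℕ :=
  Nat.card {T : TwoColoredPartition ((⊤ : SimpleGraph (Fin 3)) □ pathGraph n) //
    T.size = i ∧ bothColorsLastTriangle T}

/-- `uₙ(y) = ∑_{i ≥ 1} a(n,i) yⁱ ∈ ℤ[y]`. -/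
noncomputable def upoly (n : ℕ) : Polynomial ℤ :=
  ∑ᶠ (i : ℕ) (_ : 1 ≤ i), Polynomial.monomial i (a n i : ℤ)

/-- `vₙ(y) = ∑_{i ≥ 1} b(n,i) yⁱ ∈ ℤ[y]`. -/
noncomputable def vpoly (n : ℕ) : Polynomial ℤ :=
  ∑ᶠ (i : ℕ) (_ : 1 ≤ i), Polynomial.monomial i (b n i : ℤ)

/-!
In a 2-colored partition the parts are exactly the monochromatic components of the vertex coloring,
so 2-colored partitions are the same as arbitrary vertex colorings `c`, and the size is the number
of monochromatic components. A coloring of `K₃ × Pₙ` with monochromatic last triangle consists of a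
coloring `c` of `K₃ × Pₙ₋₁` and the color `k` of the last triangle. If `k` occurs on the last
triangle of `K₃ × Pₙ₋₁`, then the new triangle joins the component of the vertices colored `k`
there, which is unique because they form a clique; otherwise the new triangle is a new component.
So the two choices of `k` contribute the factor `1 + y` if `c` is constant on that triangle and
`2` if it is not.
-/

theorem finsum_monomial_card_fiber {C : Type*} [Fintype C] (f : C → ℕ) (hf : ∀ c, 1 ≤ f c)
    (P : C → Prop) [DecidablePred P] :
    ∑ᶠ (i : ℕ) (_ : 1 ≤ i), monomial i (Nat.card {c // f c = i ∧ P c} : ℤ) =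
      ∑ c with P c, (X : ℤ[X]) ^ f c := by
  have card_fiber (i : ℕ) :
      Nat.card {c // f c = i ∧ P c} = ({c ∈ Finset.univ.filter P | f c = i} : Finset C).card :=
    Nat.subtype_card _ fun c => by simp [and_comm]
  rw [Finset.sum_comp (fun i => (X : ℤ[X]) ^ i) f,
    finsum_cond_eq_sum_of_cond_iff (t := (Finset.univ.filter P).image f)]
  · refine Finset.sum_congr rfl fun i _ => ?_
    rw [card_fiber, ← C_mul_X_pow_eq_monomial, nsmul_eq_mul]
    simp
  · intro i hi
    have : Nat.card {c // f c = i ∧ P c} ≠ 0 := fun h =>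
      hi (by rw [h, Nat.cast_zero, monomial_zero_right])
    obtain ⟨⟨c, rfl, hP⟩⟩ := (Nat.card_ne_zero.1 this).1
    exact iff_of_true (hf c) (Finset.mem_image_of_mem f (by simpa using hP))

section Components

variable {V A : Type*}

theorem eq_of_reachable {H : SimpleGraph V} {f : V → A} (hf : ∀ v w, H.Adj v w → f v = f w)
    {v w : V} (h : H.Reachable v w) : f v = f w := by
  obtain ⟨p⟩ := h
  induction p with
  | nil => rfl
  | cons hvw _ ih => exact (hf _ _ hvw).trans ih

theorem card_connectedComponent_eq {H : SimpleGraph V} {f : V → A}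
    (hsurj : Function.Surjective f) (hadj : ∀ v w, H.Adj v w → f v = f w)
    (hreach : ∀ v w, f v = f w → H.Reachable v w) :
    Nat.card H.ConnectedComponent = Nat.card A := by
  refine Nat.card_congr (Equiv.ofBijective
    (Quot.lift f fun _ _ => eq_of_reachable hadj) ⟨?_, fun x => ?_⟩)
  · rintro ⟨v⟩ ⟨w⟩ h
    exact Quot.sound (hreach v w h)
  · obtain ⟨v, rfl⟩ := hsurj x
    exact ⟨H.connectedComponentMk v, rfl⟩

/-- The spanning subgraph of `G` formed by the edges whose endpoints get the same color under
`c`. Its connected components are the parts of the 2-colored partition with vertex colors `c`. -/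
def monoGraph (G : SimpleGraph V) (c : V → A) : SimpleGraph V where
  Adj v w := G.Adj v w ∧ c v = c w
  symm := ⟨fun _ _ h => ⟨h.1.symm, h.2.symm⟩⟩
  loopless := ⟨fun _ h => G.irrefl h.1⟩

theorem monoGraph_le (G : SimpleGraph V) (c : V → A) : monoGraph G c ≤ G :=
  fun _ _ h => h.1

theorem color_eq_of_reachable {G : SimpleGraph V} {c : V → A} {v w : V}
    (h : (monoGraph G c).Reachable v w) : c v = c w :=
  eq_of_reachable (H := monoGraph G c) (fun _ _ hvw => hvw.2) h

/-- The number of monochromatic connected components of `G` under the coloring `c`. -/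
noncomputable def numMonoComponents (G : SimpleGraph V) (c : V → A) : ℕ :=
  Nat.card (monoGraph G c).ConnectedComponent

theorem numMonoComponents_pos [Finite V] [Nonempty V] (G : SimpleGraph V) (c : V → A) :
    1 ≤ numMonoComponents G c :=
  Nat.card_pos

end Components

namespace TwoColoredPartition

variable {V : Type*} {G : SimpleGraph V}

theorem eq_of_mem_of_mem (T : TwoColoredPartition G) {p q : Set V} (hp : p ∈ T.parts)
    (hq : q ∈ T.parts) {v : V} (hvp : v ∈ p) (hvq : v ∈ q) : p = q := by
  by_contra h
  exact Set.disjoint_left.1 (T.disj p hp q hq h) hvp hvq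

theorem vcolor_eq_color (T : TwoColoredPartition G) {p : Set V} (hp : p ∈ T.parts) {v : V}
    (hv : v ∈ p) : T.vcolor v = T.color ⟨p, hp⟩ := by
  unfold vcolor
  congr 2
  exact T.eq_of_mem_of_mem (T.covers v).choose_spec.1 hp (T.covers v).choose_spec.2 hv

theorem mem_of_monoGraph_adj (T : TwoColoredPartition G) {p : Set V} (hp : p ∈ T.parts) {v w : V}
    (hvw : (monoGraph G T.vcolor).Adj v w) (hv : v ∈ p) : w ∈ p := by
  obtain ⟨q, hq, hw⟩ := T.covers w
  by_contra hwp
  have hpq : (⟨p, hp⟩ : T.parts) ≠ ⟨q, hq⟩ := fun h =>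
    hwp ((Subtype.mk.inj h : p = q) ▸ hw)
  refine T.proper _ _ hpq ⟨v, hv, w, hw, hvw.1⟩ ?_
  rw [← T.vcolor_eq_color hp hv, ← T.vcolor_eq_color hq hw, hvw.2]

theorem mem_iff_reachable (T : TwoColoredPartition G) {p : Set V} (hp : p ∈ T.parts) {v w : V}
    (hv : v ∈ p) : w ∈ p ↔ (monoGraph G T.vcolor).Reachable w v := by
  constructor
  · intro hw
    let incl : G.induce p →g monoGraph G T.vcolor :=
      ⟨Subtype.val, fun {x y} hxy =>
        ⟨hxy, (T.vcolor_eq_color hp x.2).trans (T.vcolor_eq_color hp y.2).symm⟩⟩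
    exact ((T.conn p hp).preconnected ⟨w, hw⟩ ⟨v, hv⟩).map incl
  · intro h
    have hiff : (w ∈ p) = (v ∈ p) := eq_of_reachable (f := (· ∈ p)) (fun x y hxy => propext
      ⟨T.mem_of_monoGraph_adj hp hxy, T.mem_of_monoGraph_adj hp hxy.symm⟩) h
    exact hiff.mpr hv

theorem parts_eq_range_supp (T : TwoColoredPartition G) :
    T.parts = Set.range (ConnectedComponent.supp (G := monoGraph G T.vcolor)) := by
  have supp_eq {p : Set V} (hp : p ∈ T.parts) {v : V} (hv : v ∈ p) :
      ((monoGraph G T.vcolor).connectedComponentMk v).supp = p := by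
    ext w
    rw [T.mem_iff_reachable hp hv, ConnectedComponent.mem_supp_iff, ConnectedComponent.eq]
  ext p
  constructor
  · intro hp
    obtain ⟨v, hv⟩ := T.nonempty p hp
    exact ⟨_, supp_eq hp hv⟩
  · rintro ⟨⟨v⟩, rfl⟩
    obtain ⟨p, hp, hv⟩ := T.covers v
    exact (supp_eq hp hv).symm ▸ hp

theorem size_eq_numMonoComponents (T : TwoColoredPartition G) :
    T.size = numMonoComponents G T.vcolor := by
  rw [size, parts_eq_range_supp, ← Nat.card_coe_set_eq,
    Nat.card_range_of_injective ConnectedComponent.supp_injective, numMonoComponents]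

theorem vcolor_injective : Function.Injective (vcolor : TwoColoredPartition G → V → Fin 2) := by
  intro T T' h
  have hparts : T.parts = T'.parts := by rw [parts_eq_range_supp, parts_eq_range_supp, h]
  have hcolor (p : Set V) (hp : p ∈ T.parts) (hp' : p ∈ T'.parts) :
      T.color ⟨p, hp⟩ = T'.color ⟨p, hp'⟩ := by
    obtain ⟨v, hv⟩ := T.nonempty p hp
    rw [← T.vcolor_eq_color hp hv, ← T'.vcolor_eq_color hp' hv, h]
  clear h
  obtain ⟨parts, _, _, _, _, color, _⟩ := T
  obtain ⟨parts', _, _, _, _, color', _⟩ := T'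
  obtain rfl : parts = parts' := hparts
  congr 1
  exact funext fun p => hcolor p p.2 p.2

theorem color_out_choose_eq {A : Type*} {c : V → A} {p : Set V}
    (hp : ∃ K : (monoGraph G c).ConnectedComponent, K.supp = p) {v : V} (hv : v ∈ p) :
    c hp.choose.out = c v := by
  rw [← hp.choose_spec, ConnectedComponent.mem_supp_iff] at hv
  exact color_eq_of_reachable (ConnectedComponent.exact (hp.choose.out_eq.trans hv.symm))

/-- The 2-colored partition with vertex colors `c`, whose parts are the monochromatic connected
components of `G`. -/
noncomputable def ofColoring (c : V → Fin 2) : TwoColoredPartition G where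
  parts := Set.range (ConnectedComponent.supp (G := monoGraph G c))
  nonempty := by
    rintro _ ⟨K, rfl⟩
    exact K.nonempty_supp
  covers v := ⟨_, ⟨(monoGraph G c).connectedComponentMk v, rfl⟩, rfl⟩
  disj := by
    rintro _ ⟨K, rfl⟩ _ ⟨L, rfl⟩ h
    exact pairwise_disjoint_supp_connectedComponent _ (ne_of_apply_ne _ h)
  conn := by
    rintro _ ⟨K, rfl⟩
    exact K.connected_toSimpleGraph.mono fun _ _ h => monoGraph_le G c h
  color p := c p.2.choose.out
  proper := by
    rintro ⟨_, hp⟩ ⟨_, hq⟩ hne ⟨v, hv, w, hw, hvw⟩ hcolor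
    have hcvw : c v = c w :=
      ((color_out_choose_eq hp hv).symm.trans hcolor).trans (color_out_choose_eq hq hw)
    obtain ⟨K, rfl⟩ := hp
    obtain ⟨L, rfl⟩ := hq
    obtain rfl : (monoGraph G c).connectedComponentMk v = K := hv
    obtain rfl : (monoGraph G c).connectedComponentMk w = L := hw
    have hadj : (monoGraph G c).Adj v w := ⟨hvw, hcvw⟩
    exact hne (Subtype.ext (congrArg ConnectedComponent.supp
      (ConnectedComponent.connectedComponentMk_eq_of_adj hadj)))

theorem vcolor_ofColoring (c : V → Fin 2) : (ofColoring c : TwoColoredPartition G).vcolor = c := by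
  funext v
  have hmem : ((monoGraph G c).connectedComponentMk v).supp ∈
      (ofColoring c : TwoColoredPartition G).parts := ⟨_, rfl⟩
  have hv : v ∈ ((monoGraph G c).connectedComponentMk v).supp := rfl
  rw [vcolor_eq_color _ hmem hv]
  exact color_out_choose_eq hmem hv

/-- A 2-colored partition is determined by its vertex colors, which can be arbitrary. -/
noncomputable def equivColoring : TwoColoredPartition G ≃ (V → Fin 2) :=
  Equiv.ofBijective vcolor ⟨vcolor_injective, fun c => ⟨ofColoring c, vcolor_ofColoring c⟩⟩

end TwoColoredPartition

section SizePoly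

variable {V : Type*}

/-- The generating polynomial, by size, of the 2-colored partitions of `G` whose vertex colors
satisfy `P`. As in `upoly` and `vpoly`, only sizes `i ≥ 1` are counted. -/
noncomputable def sizePoly (G : SimpleGraph V) (P : (V → Fin 2) → Prop) : ℤ[X] :=
  ∑ᶠ (i : ℕ) (_ : 1 ≤ i),
    monomial i (Nat.card {T : TwoColoredPartition G // T.size = i ∧ P T.vcolor} : ℤ)

/-- The generating polynomial, by size, of the 2-colored partitions of `G` in which at most one
color occurs on `S`. -/
noncomputable def monochromaticPoly (G : SimpleGraph V) (S : Set V) : ℤ[X] :=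
  sizePoly G fun c => (c '' S).Subsingleton

/-- The generating polynomial, by size, of the 2-colored partitions of `G` in which both colors
occur on `S`. -/
noncomputable def bichromaticPoly (G : SimpleGraph V) (S : Set V) : ℤ[X] :=
  sizePoly G fun c => (c '' S).Nontrivial

theorem sizePoly_eq_sum [Fintype V] [DecidableEq V] [Nonempty V] (G : SimpleGraph V)
    (P : (V → Fin 2) → Prop) [DecidablePred P] :
    sizePoly G P = ∑ c with P c, X ^ numMonoComponents G c := by
  rw [← finsum_monomial_card_fiber _ (numMonoComponents_pos G)]
  refine finsum_congr fun i => finsum_congr fun _ => ?_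
  congr 2
  refine Nat.card_congr (TwoColoredPartition.equivColoring.subtypeEquiv fun T => ?_)
  rw [T.size_eq_numMonoComponents]
  rfl

end SizePoly

section Extension

variable {V W A : Type*}

/-- The function equal to `g` on the copy of `V` embedded in `W` by `e`, and to `z` elsewhere.
It extends both colorings and labelings of components from a graph on `V` to one on `W`. -/
noncomputable def extendConst (e : V → W) (g : V → A) (z : A) : W → A :=
  Function.extend e g fun _ => z

theorem extendConst_apply {e : V → W} (he : Function.Injective e) (g : V → A) (z : A) (v : V) :
    extendConst e g z (e v) = g v :=
  he.extend_apply g _ v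

theorem extendConst_of_notMem_range {e : V → W} (g : V → A) (z : A) {x : W}
    (hx : x ∉ Set.range e) : extendConst e g z x = z :=
  Function.extend_apply' g _ x hx

theorem extendConst_comp_apply {e : V → W} (he : Function.Injective e) {c : W → A}
    (hc : (c '' (Set.range e)ᶜ).Subsingleton) {x₀ : W} (hx₀ : x₀ ∉ Set.range e) :
    extendConst e (c ∘ e) (c x₀) = c := by
  funext x
  obtain ⟨v, rfl⟩ | hx := em (x ∈ Set.range e)
  · exact extendConst_apply he _ _ v
  · rw [extendConst_of_notMem_range _ _ hx]
    exact hc (Set.mem_image_of_mem c hx₀) (Set.mem_image_of_mem c hx)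

theorem sum_subsingleton_image_compl_range [Fintype V] [DecidableEq V] [Fintype W] [DecidableEq W]
    [Fintype A] {M : Type*} [AddCommMonoid M] {e : V → W} (he : Function.Injective e)
    (hne : (Set.range e)ᶜ.Nonempty)
    [DecidablePred fun c : W → A => (c '' (Set.range e)ᶜ).Subsingleton] (F : (W → A) → M) :
    ∑ c with (c '' (Set.range e)ᶜ).Subsingleton, F c = ∑ c, ∑ z, F (extendConst e c z) := by
  obtain ⟨x₀, hx₀⟩ := hne
  rw [← Fintype.sum_prod_type']
  refine Finset.sum_nbij' (fun c => (c ∘ e, c x₀)) (fun p => extendConst e p.1 p.2)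
    (by simp) ?_ ?_ ?_ ?_
  · rintro ⟨c, z⟩ _
    rw [Finset.mem_filter_univ]
    rintro _ ⟨x, hx, rfl⟩ _ ⟨y, hy, rfl⟩
    rw [extendConst_of_notMem_range c z hx, extendConst_of_notMem_range c z hy]
  · intro c hc
    exact extendConst_comp_apply he ((Finset.mem_filter_univ c).1 hc) hx₀
  · rintro ⟨c, z⟩ _
    exact Prod.ext (funext (extendConst_apply he c z)) (extendConst_of_notMem_range c z hx₀)
  · intro c hc
    rw [extendConst_comp_apply he ((Finset.mem_filter_univ c).1 hc) hx₀]

variable {G : SimpleGraph V} {H : SimpleGraph W}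

/-- The vertices of `G` that have a neighbor outside `G` when `G` is viewed inside `H`. -/
def innerBoundary (e : G ↪g H) : Set V :=
  {v | ∃ x ∉ Set.range e, H.Adj (e v) x}

variable {e : G ↪g H} {c : V → A} {k : A}

theorem reachable_extendConst {v w : V} (h : (monoGraph G c).Reachable v w) :
    (monoGraph H (extendConst e c k)).Reachable (e v) (e w) := by
  let φ : monoGraph G c →g monoGraph H (extendConst e c k) :=
    ⟨e, fun {x y} hxy => ⟨e.map_adj_iff.2 hxy.1, by
      rw [extendConst_apply e.injective, extendConst_apply e.injective, hxy.2]⟩⟩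
  exact h.map φ

theorem reachable_of_notMem_range (hL : (H.induce (Set.range e)ᶜ).Preconnected) {x y : W}
    (hx : x ∉ Set.range e) (hy : y ∉ Set.range e) :
    (monoGraph H (extendConst e c k)).Reachable x y := by
  let incl : H.induce (Set.range e)ᶜ →g monoGraph H (extendConst e c k) :=
    ⟨Subtype.val, fun {u w} huw => ⟨huw, by
      rw [extendConst_of_notMem_range c k u.2, extendConst_of_notMem_range c k w.2]⟩⟩
  exact (hL ⟨x, hx⟩ ⟨y, hy⟩).map incl

theorem reachable_of_mem_innerBoundary (hL : (H.induce (Set.range e)ᶜ).Preconnected) {v : V}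
    (hv : v ∈ innerBoundary e) (hvk : c v = k) {x : W} (hx : x ∉ Set.range e) :
    (monoGraph H (extendConst e c k)).Reachable (e v) x := by
  obtain ⟨y, hy, hvy⟩ := hv
  have hadj : (monoGraph H (extendConst e c k)).Adj (e v) y :=
    ⟨hvy, by rw [extendConst_apply e.injective, extendConst_of_notMem_range c k hy, hvk]⟩
  exact hadj.reachable.trans (reachable_of_notMem_range hL hy hx)

theorem extendConst_eq_of_adj {B : Type*} {g : V → B} {z : B}
    (hg : ∀ v w, (monoGraph G c).Adj v w → g v = g w)
    (hz : ∀ v ∈ innerBoundary e, c v = k → g v = z) {x y : W}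
    (hxy : (monoGraph H (extendConst e c k)).Adj x y) :
    extendConst e g z x = extendConst e g z y := by
  have eq_outer {v : V} {y : W} (hy : y ∉ Set.range e)
      (hvy : (monoGraph H (extendConst e c k)).Adj (e v) y) : g v = z := by
    refine hz v ⟨y, hy, hvy.1⟩ ?_
    rw [← extendConst_apply e.injective c k, hvy.2, extendConst_of_notMem_range c k hy]
  obtain ⟨v, rfl⟩ | hx := em (x ∈ Set.range e) <;> obtain ⟨w, rfl⟩ | hy := em (y ∈ Set.range e)
  · have hc := hxy.2
    rw [extendConst_apply e.injective, extendConst_apply e.injective] at hc ⊢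
    exact hg v w ⟨e.map_adj_iff.1 hxy.1, hc⟩
  · rw [extendConst_apply e.injective, extendConst_of_notMem_range g z hy, eq_outer hy hxy]
  · rw [extendConst_apply e.injective, extendConst_of_notMem_range g z hx, eq_outer hx hxy.symm]
  · rw [extendConst_of_notMem_range g z hx, extendConst_of_notMem_range g z hy]

theorem reachable_of_extendConst_eq {B : Type*} {g : V → B} {z : B}
    (hL : (H.induce (Set.range e)ᶜ).Preconnected)
    (hg : ∀ v w, g v = g w → (monoGraph G c).Reachable v w)
    (hz : ∀ v, g v = z → ∃ w ∈ innerBoundary e, c w = k ∧ (monoGraph G c).Reachable v w) {x y : W}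
    (hxy : extendConst e g z x = extendConst e g z y) :
    (monoGraph H (extendConst e c k)).Reachable x y := by
  have reach_outer {v : V} {y : W} (hv : g v = z) (hy : y ∉ Set.range e) :
      (monoGraph H (extendConst e c k)).Reachable (e v) y := by
    obtain ⟨w, hw, hwk, hvw⟩ := hz v hv
    exact (reachable_extendConst hvw).trans (reachable_of_mem_innerBoundary hL hw hwk hy)
  obtain ⟨v, rfl⟩ | hx := em (x ∈ Set.range e) <;> obtain ⟨w, rfl⟩ | hy := em (y ∈ Set.range e)
  · rw [extendConst_apply e.injective, extendConst_apply e.injective] at hxy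
    exact reachable_extendConst (hg v w hxy)
  · rw [extendConst_apply e.injective, extendConst_of_notMem_range g z hy] at hxy
    exact reach_outer hxy hy
  · rw [extendConst_apply e.injective, extendConst_of_notMem_range g z hx] at hxy
    exact (reach_outer hxy.symm hx).symm
  · exact reachable_of_notMem_range hL hx hy

-- `B` stands for the components of the extended coloring: `g` labels the component of each vertex
-- of `G`, and `z` labels the component containing the complement of `G`.
theorem numMonoComponents_extendConst_eq_card {B : Type*} {g : V → B} {z : B}
    (hL : (H.induce (Set.range e)ᶜ).Connected)
    (hg : ∀ v w, g v = g w ↔ (monoGraph G c).Reachable v w)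
    (hsurj : ∀ i, i ≠ z → i ∈ Set.range g)
    (hz : ∀ v ∈ innerBoundary e, c v = k → g v = z)
    (hz' : ∀ v, g v = z → ∃ w ∈ innerBoundary e, c w = k ∧ (monoGraph G c).Reachable v w) :
    numMonoComponents H (extendConst e c k) = Nat.card B := by
  refine card_connectedComponent_eq (f := extendConst e g z) (fun i => ?_)
    (fun _ _ => extendConst_eq_of_adj (fun v w hvw => (hg v w).2 hvw.reachable) hz)
    (fun _ _ => reachable_of_extendConst_eq hL.preconnected (fun v w => (hg v w).1) hz')
  by_cases hi : i = z
  · obtain ⟨x, hx⟩ := hL.nonempty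
    exact ⟨x, (extendConst_of_notMem_range g z hx).trans hi.symm⟩
  · obtain ⟨v, rfl⟩ := hsurj i hi
    exact ⟨e v, extendConst_apply e.injective g z v⟩

theorem numMonoComponents_extendConst_of_mem (hL : (H.induce (Set.range e)ᶜ).Connected)
    (hclique : G.IsClique (innerBoundary e)) (hk : k ∈ c '' innerBoundary e) :
    numMonoComponents H (extendConst e c k) = numMonoComponents G c := by
  obtain ⟨v₀, hv₀, hv₀k⟩ := hk
  refine numMonoComponents_extendConst_eq_card (g := (monoGraph G c).connectedComponentMk)
    (z := (monoGraph G c).connectedComponentMk v₀) hL (fun v w => ConnectedComponent.eq)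
    (fun i _ => Quot.mk_surjective i) (fun v hv hvk => ?_)
    (fun v hv => ⟨v₀, hv₀, hv₀k, ConnectedComponent.exact hv⟩)
  obtain rfl | hne := eq_or_ne v v₀
  · rfl
  · exact ConnectedComponent.connectedComponentMk_eq_of_adj
      (show (monoGraph G c).Adj v v₀ from ⟨hclique hv hv₀ hne, hvk.trans hv₀k.symm⟩)

theorem numMonoComponents_extendConst_of_notMem [Finite V]
    (hL : (H.induce (Set.range e)ᶜ).Connected) (hk : k ∉ c '' innerBoundary e) :
    numMonoComponents H (extendConst e c k) = numMonoComponents G c + 1 := by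
  rw [numMonoComponents, numMonoComponents, ← Finite.card_option]
  refine numMonoComponents_extendConst_eq_card
    (g := fun v => some ((monoGraph G c).connectedComponentMk v)) (z := none) hL
    (fun v w => by rw [Option.some_inj, ConnectedComponent.eq]) ?_
    (fun v hv hvk => (hk ⟨v, hv, hvk⟩).elim) (fun v hv => (Option.some_ne_none _ hv).elim)
  rintro (_ | ⟨⟨v⟩⟩) hi
  · exact (hi rfl).elim
  · exact ⟨v, rfl⟩

end Extension

section Recurrence

variable {V W : Type*} {G : SimpleGraph V} {H : SimpleGraph W} {e : G ↪g H}

open scoped Classical in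
theorem monochromaticPoly_compl_range_eq_sum [Fintype V] [Finite W]
    (hL : (H.induce (Set.range e)ᶜ).Connected) (hclique : G.IsClique (innerBoundary e)) :
    monochromaticPoly H (Set.range e)ᶜ = ∑ c : V → Fin 2, X ^ numMonoComponents G c *
      ∑ k, if k ∈ c '' innerBoundary e then 1 else X := by
  cases nonempty_fintype W
  have hne : (Set.range e)ᶜ.Nonempty := Set.nonempty_coe_sort.1 hL.nonempty
  have : Nonempty W := hne.to_type
  rw [monochromaticPoly, sizePoly_eq_sum, sum_subsingleton_image_compl_range e.injective hne]
  refine Finset.sum_congr rfl fun c _ => ?_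
  rw [Finset.mul_sum]
  refine Finset.sum_congr rfl fun k _ => ?_
  split_ifs with hk
  · rw [numMonoComponents_extendConst_of_mem hL hclique hk, mul_one]
  · rw [numMonoComponents_extendConst_of_notMem hL hk, pow_succ]

open scoped Classical in
theorem sum_ite_mem_of_subsingleton {M : Type*} [AddCommMonoid M] {S : Set (Fin 2)}
    (hS : S.Subsingleton) (hne : S.Nonempty) (x y : M) :
    ∑ k, (if k ∈ S then x else y) = x + y := by
  obtain ⟨k, rfl⟩ := Set.exists_eq_singleton_iff_nonempty_subsingleton.2 ⟨hne, hS⟩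
  fin_cases k <;> simp [add_comm]

theorem eq_univ_of_nontrivial {S : Set (Fin 2)} (hS : S.Nontrivial) : S = Set.univ := by
  obtain ⟨i, hi, j, hj, hij⟩ := hS
  refine Set.eq_univ_of_forall fun k => ?_
  obtain rfl | rfl : k = i ∨ k = j := by omega
  exacts [hi, hj]

theorem monochromaticPoly_univ [Finite W] (hH : H.Connected) :
    monochromaticPoly H Set.univ = 2 * X := by
  let e : (⊥ : SimpleGraph Empty) ↪g H := ⟨.ofIsEmpty, fun {v} => v.elim⟩
  have hrange : (Set.range e)ᶜ = Set.univ := by rw [Set.range_eq_empty, Set.compl_empty]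
  have hL : (H.induce (Set.range e)ᶜ).Connected :=
    hrange ▸ (induceUnivIso H).connected_iff.2 hH
  have hcount (c : Empty → Fin 2) : numMonoComponents (⊥ : SimpleGraph Empty) c = 0 :=
    Nat.card_of_isEmpty
  rw [← hrange, monochromaticPoly_compl_range_eq_sum hL (by simp [Set.eq_empty_of_isEmpty])]
  simp [hcount, Set.eq_empty_of_isEmpty]

theorem monochromaticPoly_compl_range [Finite V] [Finite W]
    (hL : (H.induce (Set.range e)ᶜ).Connected) (hclique : G.IsClique (innerBoundary e))
    (hne : (innerBoundary e).Nonempty) :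
    monochromaticPoly H (Set.range e)ᶜ =
      (1 + X) * monochromaticPoly G (innerBoundary e) +
        2 * bichromaticPoly G (innerBoundary e) := by
  classical
  cases nonempty_fintype V
  have : Nonempty V := hne.to_type
  rw [monochromaticPoly_compl_range_eq_sum hL hclique, monochromaticPoly, bichromaticPoly,
    sizePoly_eq_sum, sizePoly_eq_sum, Finset.mul_sum, Finset.mul_sum,
    ← Finset.sum_filter_add_sum_filter_not _ fun c => (c '' innerBoundary e).Subsingleton]
  simp only [Set.not_subsingleton_iff]
  congr 1 <;> refine Finset.sum_congr rfl fun c hc => ?_ <;> rw [Finset.mem_filter_univ] at hc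
  · rw [sum_ite_mem_of_subsingleton hc (hne.image c), mul_comm]
  · rw [eq_univ_of_nontrivial hc]
    simp [mul_comm]

end Recurrence

section Prism

/-- `K_α × Pₙ`, the Cartesian product of the complete graph on `α` and the path on `n` vertices. -/
abbrev prism (α : Type*) (n : ℕ) : SimpleGraph (α × Fin n) :=
  (⊤ : SimpleGraph α) □ pathGraph n

/-- The copy of `α` in `K_α × Pₙ` over the last vertex of the path, empty if `n = 0`. It is the
analogue of the last triangle of `K₃ × Pₙ`. -/
def lastLayer (α : Type*) (n : ℕ) : Set (α × Fin n) :=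
  {v | (v.2 : ℕ) + 1 = n}

/-- The inclusion of `K_α × Pₙ` in `K_α × Pₙ₊₁` as the first `n` layers. -/
def prismSucc (α : Type*) (n : ℕ) : prism α n ↪g prism α (n + 1) where
  toFun v := (v.1, v.2.castSucc)
  inj' v w h := by simpa [Prod.ext_iff] using h
  map_rel_iff' {v w} := by
    change (prism α (n + 1)).Adj (v.1, v.2.castSucc) (w.1, w.2.castSucc) ↔ _
    simp [boxProd_adj, pathGraph_adj]

theorem prismSucc_apply {α : Type*} {n : ℕ} (v : α × Fin n) :
    prismSucc α n v = (v.1, v.2.castSucc) :=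
  rfl

variable (α : Type*) (n : ℕ)

theorem compl_range_prismSucc : (Set.range (prismSucc α n))ᶜ = lastLayer α (n + 1) := by
  ext ⟨i, j⟩
  induction j using Fin.lastCases with
  | last => simp [prismSucc_apply, lastLayer]
  | cast j => simp [prismSucc_apply, lastLayer, j.isLt.ne]

theorem innerBoundary_prismSucc : innerBoundary (prismSucc α n) = lastLayer α n := by
  ext v
  simp only [innerBoundary, ← Set.mem_compl_iff, compl_range_prismSucc, Set.mem_ofPred_eq]
  constructor
  · rintro ⟨⟨i, j⟩, hj, hadj⟩
    have hv := v.2.isLt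
    simp only [lastLayer, Nat.add_right_cancel_iff, Set.mem_ofPred_eq, prismSucc_apply, boxProd_adj,
      top_adj, ne_eq, Fin.ext_iff, Fin.val_castSucc, pathGraph_adj] at hj hadj ⊢
    omega
  · intro hv
    refine ⟨(v.1, Fin.last n), rfl, boxProd_adj_right.2 ?_⟩
    exact pathGraph_adj.2 (Or.inl hv)

theorem isClique_lastLayer : (prism α n).IsClique (lastLayer α n) := by
  rintro ⟨i, j⟩ hj ⟨i', j'⟩ hj' hne
  obtain rfl : j = j' := Fin.ext (Nat.succ_injective (hj.trans hj'.symm))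
  exact boxProd_adj_left.2 fun h => hne (by rw [h])

variable [Nonempty α]

theorem lastLayer_nonempty : (lastLayer α (n + 1)).Nonempty :=
  ⟨(Classical.arbitrary α, Fin.last n), rfl⟩

theorem connected_induce_lastLayer :
    ((prism α (n + 1)).induce (lastLayer α (n + 1))).Connected := by
  have := (lastLayer_nonempty α n).to_subtype
  rw [induce_eq_top.2 (isClique_lastLayer α (n + 1))]
  exact connected_top

variable [Finite α]

theorem monochromaticPoly_prism_one :
    monochromaticPoly (prism α 1) (lastLayer α 1) = 2 * X := by
  have huniv : lastLayer α 1 = Set.univ := Set.eq_univ_of_forall fun v => by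
    simp [lastLayer]
  rw [huniv]
  exact monochromaticPoly_univ (connected_top.boxProd (pathGraph_connected 0))

theorem monochromaticPoly_prism_succ :
    monochromaticPoly (prism α (n + 2)) (lastLayer α (n + 2)) =
      (1 + X) * monochromaticPoly (prism α (n + 1)) (lastLayer α (n + 1)) +
        2 * bichromaticPoly (prism α (n + 1)) (lastLayer α (n + 1)) := by
  have hL := connected_induce_lastLayer α (n + 1)
  have hclique := isClique_lastLayer α (n + 1)
  have hne := lastLayer_nonempty α n
  rw [← compl_range_prismSucc] at hL ⊢
  rw [← innerBoundary_prismSucc] at hclique hne ⊢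
  exact monochromaticPoly_compl_range hL hclique hne

end Prism

theorem mem_lastLayer_iff {α : Type*} {n : ℕ} (v : α × Fin n) :
    v ∈ lastLayer α n ↔ (v.2 : ℕ) = n - 1 := by
  have := v.2.isLt
  simp only [lastLayer, Set.mem_ofPred_eq]
  omega

theorem sameColorLastTriangle_iff {n : ℕ} (T : TwoColoredPartition (prism (Fin 3) n)) :
    sameColorLastTriangle T ↔ (T.vcolor '' lastLayer (Fin 3) n).Subsingleton := by
  simp only [sameColorLastTriangle, Set.Subsingleton, Set.forall_mem_image, mem_lastLayer_iff]
  exact ⟨fun h v hv w => h v w hv, fun h v w hv hw => h hv hw⟩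

theorem bothColorsLastTriangle_iff {n : ℕ} (T : TwoColoredPartition (prism (Fin 3) n)) :
    bothColorsLastTriangle T ↔ (T.vcolor '' lastLayer (Fin 3) n).Nontrivial := by
  rw [← Set.not_subsingleton_iff, ← sameColorLastTriangle_iff]
  simp only [sameColorLastTriangle, bothColorsLastTriangle, not_forall, exists_prop]

theorem upoly_eq_monochromaticPoly (n : ℕ) :
    upoly n = monochromaticPoly (prism (Fin 3) n) (lastLayer (Fin 3) n) := by
  simp only [upoly, a, sameColorLastTriangle_iff, monochromaticPoly, sizePoly]

theorem vpoly_eq_bichromaticPoly (n : ℕ) :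
    vpoly n = bichromaticPoly (prism (Fin 3) n) (lastLayer (Fin 3) n) := by
  simp only [vpoly, b, bothColorsLastTriangle_iff, bichromaticPoly, sizePoly]

theorem upoly_recurrence_general (α : Type*) [Nonempty α] [Finite α] :
    monochromaticPoly (prism α 1) (lastLayer α 1) = 2 * X ∧
    ∀ n : ℕ, 2 ≤ n → monochromaticPoly (prism α n) (lastLayer α n) =
      (1 + X) * monochromaticPoly (prism α (n - 1)) (lastLayer α (n - 1)) +
        2 * bichromaticPoly (prism α (n - 1)) (lastLayer α (n - 1)) := by
  refine ⟨monochromaticPoly_prism_one α, fun n hn => ?_⟩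
  obtain ⟨n, rfl⟩ := Nat.exists_eq_add_of_le' hn
  exact monochromaticPoly_prism_succ α n

/-- `u₁(y) = 2y`, and for all `n ≥ 2`, `uₙ(y) = (1 + y)·u_{n-1}(y) + 2·v_{n-1}(y)`.
Equivalently, `T₁ = 2xy + x·T₁ + xy·T₁ + 2x·T₂` for the corresponding bivariate
generating functions. -/
theorem upoly_recurrence :
    upoly 1 = 2 * Polynomial.X ∧
    ∀ n : ℕ, 2 ≤ n →
      upoly n = (1 + Polynomial.X) * upoly (n - 1) + 2 * vpoly (n - 1) := by
  simpa only [upoly_eq_monochromaticPoly, vpoly_eq_bichromaticPoly] using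
    upoly_recurrence_general (Fin 3)
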